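/- arXiv:1809.02434 — 2 statements merged into one kernel-verified Lean document; each statement's English description precedes it below -/
import Mathlib

section
/- Let G = (V,E) be a finite simple graph, let 1 ≤ k ≤ |V|, and let λ > 0. Let W_1, …, W_k be pairwise distinct nonempty subsets of V such that W_1 has maximum density among all nonempty subsets of V and, for each 2 ≤ i ≤ k, W_i has maximum density among all nonempty subsets of V distinct from each of W_1, …, W_{i-1}. Let W'_1, …, W'_k be k pairwise disjoint singletons of V. Then for every tuple W°_1, …, W°_k of pairwise distinct nonempty subsets of V: max( r(W_1,…,W_k), r(W'_1,…,W'_k) ) ≥ (2/3) · r(W°_1,…,W°_k). -/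
open Finset

/-- The number of edges of `G` with both endpoints in `U`. -/
noncomputable def edgeCount {V : Type*} (G : SimpleGraph V) (U : Finset V) : ℕ :=
  Set.ncard {e : Sym2 V | e ∈ G.edgeSet ∧ ∀ v ∈ e, v ∈ U}

/-- The density of the subgraph of `G` induced by `U`. -/
noncomputable def dens {V : Type*} (G : SimpleGraph V) (U : Finset V) : ℝ :=
  (edgeCount G U : ℝ) / U.card

/-- The distance between two finite sets used in the paper. -/
noncomputable def ddist {α : Type*} [DecidableEq α] (U Z : Finset α) : ℝ :=
  if U = Z then 0 else 2 - ((U ∩ Z).card : ℝ) ^ 2 / ((U.card : ℝ) * (Z.card : ℝ))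

/-- The objective function of Top-k-Overlapping Densest Subgraphs. -/
noncomputable def rval {V : Type*} [DecidableEq V] (G : SimpleGraph V) (lam : ℝ)
    {k : ℕ} (W : Fin k → Finset V) : ℝ :=
  (∑ i, dens G (W i)) + lam * (∑ i, ∑ j, if i < j then ddist (W i) (W j) else 0)

/-!
Replacing the optimal tuple `Wo` by the greedy tuple `W` does not decrease the total density and at
most halves the total distance, since all distances between distinct sets lie in `[1, 2]`.
Replacing it by the disjoint tuple `W'` does not decrease the total distance. Hence
`2/3 * r(Wo) ≤ 2/3 * r(W) + 1/3 * r(W')`, and the right-hand side is a convex combination.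
-/

section SumComparison

variable {ι β γ M : Type*} [AddCommMonoid M] [PartialOrder M] [IsOrderedAddMonoid M]

lemma sum_le_sum_of_card_eq {s : Finset β} {t : Finset γ} {f : β → M} {g : γ → M}
    (hcard : s.card = t.card) (h : ∀ a ∈ s, ∀ b ∈ t, f a ≤ g b) :
    ∑ a ∈ s, f a ≤ ∑ b ∈ t, g b := by
  let e : s ≃ t := equivOfCardEq hcard
  calc ∑ a ∈ s, f a = ∑ a : s, f a := (sum_coe_sort s f).symm
    _ ≤ ∑ a : s, g (e a) := sum_le_sum fun a _ => h a a.2 (e a) (e a).2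
    _ = ∑ b : t, g b := e.sum_comp fun b : t => g b
    _ = ∑ b ∈ t, g b := sum_coe_sort t g

lemma sum_le_sum_of_card_eq_of_forall_sdiff [DecidableEq β] {s t : Finset β} {f : β → M}
    (hcard : s.card = t.card) (h : ∀ a ∈ s \ t, ∀ b ∈ t \ s, f a ≤ f b) :
    ∑ a ∈ s, f a ≤ ∑ b ∈ t, f b := by
  rw [← sum_inter_add_sum_sdiff s t, ← sum_inter_add_sum_sdiff t s, inter_comm t s]
  gcongr _ + ?_
  exact sum_le_sum_of_card_eq (card_sdiff_comm hcard) h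

lemma sum_comp_le_sum_comp_of_injective [Fintype ι] {f : β → M} {u w : ι → β}
    (hu : Function.Injective u) (hw : Function.Injective w)
    (h : ∀ i j, u j ∉ Set.range w → f (u j) ≤ f (w i)) :
    ∑ i, f (u i) ≤ ∑ i, f (w i) := by
  classical
  rw [← sum_image hu.injOn, ← sum_image hw.injOn]
  refine sum_le_sum_of_card_eq_of_forall_sdiff ?_ ?_
  · rw [card_image_of_injective _ hu, card_image_of_injective _ hw]
  · simp only [mem_sdiff, mem_image, mem_univ, true_and]
    rintro _ ⟨⟨j, rfl⟩, hj⟩ _ ⟨⟨i, rfl⟩, -⟩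
    exact h i j hj

end SumComparison

lemma dens_nonneg {V : Type*} (G : SimpleGraph V) (U : Finset V) : 0 ≤ dens G U :=
  div_nonneg (Nat.cast_nonneg _) (Nat.cast_nonneg _)

section Distance

variable {α : Type*} [DecidableEq α] {U Z : Finset α}

lemma ddist_of_ne (h : U ≠ Z) :
    ddist U Z = 2 - ((U ∩ Z).card : ℝ) ^ 2 / ((U.card : ℝ) * (Z.card : ℝ)) :=
  if_neg h

lemma ddist_le_two (U Z : Finset α) : ddist U Z ≤ 2 := by
  by_cases h : U = Z
  · simp [ddist, h]
  · rw [ddist_of_ne h]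
    exact sub_le_self _ (by positivity)

lemma one_le_ddist (hU : U.Nonempty) (hZ : Z.Nonempty) (h : U ≠ Z) : 1 ≤ ddist U Z := by
  have inter_sq_le : ((U ∩ Z).card : ℝ) ^ 2 ≤ (U.card : ℝ) * (Z.card : ℝ) := by
    rw [sq]
    gcongr
    exacts [inter_subset_left, inter_subset_right]
  have ratio_le_one : ((U ∩ Z).card : ℝ) ^ 2 / ((U.card : ℝ) * (Z.card : ℝ)) ≤ 1 :=
    (div_le_one (by positivity)).mpr inter_sq_le
  rw [ddist_of_ne h]
  linarith

lemma ddist_eq_two_of_disjoint (h : U ≠ Z) (hdisj : Disjoint U Z) : ddist U Z = 2 := by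
  simp [ddist_of_ne h, disjoint_iff_inter_eq_empty.mp hdisj]

end Distance

section Diversity

variable {ι α : Type*} [Fintype ι] [Preorder ι] [DecidableLT ι] [DecidableEq α]

/-- The total distance between the members of a family of finite sets, i.e. the coefficient of `λ`
in the objective `rval`. Each unordered pair is counted once, through its indices `i < j`. -/
noncomputable def diversity (W : ι → Finset α) : ℝ :=
  ∑ i, ∑ j, if i < j then ddist (W i) (W j) else 0

lemma diversity_le_mul_diversity {U W : ι → Finset α} {c : ℝ}
    (h : ∀ i j, i < j → ddist (U i) (U j) ≤ c * ddist (W i) (W j)) :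
    diversity U ≤ c * diversity W := by
  simp only [diversity, mul_sum, mul_ite, mul_zero]
  gcongr with i _ j
  split_ifs with hij
  exacts [h i j hij, le_rfl]

lemma diversity_le_two_mul_of_injective (U : ι → Finset α) {W : ι → Finset α}
    (hne : ∀ i, (W i).Nonempty) (hinj : Function.Injective W) :
    diversity U ≤ 2 * diversity W := by
  refine diversity_le_mul_diversity fun i j hij => ?_
  have one_le : 1 ≤ ddist (W i) (W j) := one_le_ddist (hne i) (hne j) (hinj.ne hij.ne)
  linarith [ddist_le_two (U i) (U j)]

lemma diversity_le_of_pairwise_disjoint (U : ι → Finset α) {W : ι → Finset α}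
    (hne : ∀ i, (W i).Nonempty) (hdisj : Pairwise fun i j => Disjoint (W i) (W j)) :
    diversity U ≤ diversity W := by
  rw [← one_mul (diversity W)]
  refine diversity_le_mul_diversity fun i j hij => ?_
  have hij_disj : Disjoint (W i) (W j) := hdisj hij.ne
  rw [one_mul, ddist_eq_two_of_disjoint (hij_disj.ne (hne i).ne_empty) hij_disj]
  exact ddist_le_two _ _

end Diversity

lemma rval_eq_sum_dens_add {V : Type*} [DecidableEq V] (G : SimpleGraph V) (lam : ℝ) {k : ℕ}
    (W : Fin k → Finset V) : rval G lam W = ∑ i, dens G (W i) + lam * diversity W :=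
  rfl

theorem stmt_4_general {V : Type*} [DecidableEq V] (G : SimpleGraph V) {k : ℕ} {lam : ℝ}
    (hlam : 0 ≤ lam) {W W' Wo : Fin k → Finset V}
    (hWne : ∀ i, (W i).Nonempty) (hWinj : Function.Injective W)
    (hmax : ∀ i Z, Z.Nonempty → Z ∉ Set.range W → dens G Z ≤ dens G (W i))
    (hW'ne : ∀ i, (W' i).Nonempty) (hW'disj : Pairwise fun i j => Disjoint (W' i) (W' j))
    (hWone : ∀ i, (Wo i).Nonempty) (hWoinj : Function.Injective Wo) :
    2 / 3 * rval G lam Wo ≤ max (rval G lam W) (rval G lam W') := by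
  have sum_dens_le : ∑ i, dens G (Wo i) ≤ ∑ i, dens G (W i) :=
    sum_comp_le_sum_comp_of_injective hWoinj hWinj fun i j hj => hmax i (Wo j) (hWone j) hj
  have sum_dens_nonneg : 0 ≤ ∑ i, dens G (W' i) := sum_nonneg fun i _ => dens_nonneg G (W' i)
  have diversity_le_greedy : lam * diversity Wo ≤ lam * (2 * diversity W) :=
    mul_le_mul_of_nonneg_left (diversity_le_two_mul_of_injective Wo hWne hWinj) hlam
  have diversity_le_disjoint : lam * diversity Wo ≤ lam * diversity W' :=
    mul_le_mul_of_nonneg_left (diversity_le_of_pairwise_disjoint Wo hW'ne hW'disj) hlam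
  calc 2 / 3 * rval G lam Wo
      ≤ 2 / 3 * rval G lam W + 1 / 3 * rval G lam W' := by
        simp only [rval_eq_sum_dens_add]
        linarith
    _ ≤ max (rval G lam W) (rval G lam W') := by
        linarith [le_max_left (rval G lam W) (rval G lam W'),
          le_max_right (rval G lam W) (rval G lam W')]

/-- Theorem 8 of the paper. -/
theorem stmt_4 {V : Type*} [Fintype V] [DecidableEq V]
    (G : SimpleGraph V) {k : ℕ} (hk : 1 ≤ k) (hk' : k ≤ Fintype.card V)
    (lam : ℝ) (hlam : 0 < lam)
    (W : Fin k → Finset V) (hWne : ∀ i, (W i).Nonempty)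
    (hWinj : Function.Injective W)
    (hmax : ∀ i : Fin k, ∀ Z : Finset V, Z.Nonempty →
      (∀ j : Fin k, j < i → Z ≠ W j) → dens G Z ≤ dens G (W i))
    (W' : Fin k → Finset V) (hW'card : ∀ i, (W' i).card = 1)
    (hW'disj : ∀ i j : Fin k, i ≠ j → Disjoint (W' i) (W' j))
    (Wo : Fin k → Finset V) (hWone : ∀ i, (Wo i).Nonempty)
    (hWoinj : Function.Injective Wo) :
    max (rval G lam W) (rval G lam W') ≥ (2 / 3) * rval G lam Wo :=
  stmt_4_general G hlam.le hWne hWinj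
    (fun i Z hZ hZW => hmax i Z hZ fun j _ hj => hZW ⟨j, hj.symm⟩)
    (fun i => card_pos.mp ((hW'card i).symm ▸ one_pos)) (fun i j => hW'disj i j) hWone hWoinj
end

section
/- Let G = (V,E) be a finite simple graph and let W_1, …, W_t ⊆ V be subsets such that no two of them are crossing. Suppose there exists at least one nonempty subset of V distinct from every W_i. Call a pair (U_1, U_2) of disjoint subsets of V with |U_1| ≤ 2 and |U_2| ≤ 1 admissible if no W_j (1 ≤ j ≤ t) satisfies both W_j ⊇ U_1 and W_j ∩ U_2 = ∅. Then the maximum of dens(Z) over all nonempty Z ⊆ V with Z ≠ W_i for every i equals the maximum, over admissible pairs (U_1, U_2), of the maximum of dens(Z) over all nonempty Z with U_1 ⊆ Z ⊆ V \ U_2. -/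
open Finset

/-- Two subsets are crossing if they intersect and neither contains the other. -/
def Crossing {V : Type*} [DecidableEq V] (A B : Finset V) : Prop :=
  (A ∩ B).Nonempty ∧ (A \ B).Nonempty ∧ (B \ A).Nonempty

/-!
Let `Z` be nonempty and not a member of the family, and fix `a ∈ Z`. The members that contain `a`
are nested. So a single point `b ∈ Z`, chosen outside the largest of them not including `Z`, lies
outside all of those, and a single point `u ∉ Z`, chosen in the smallest of them including `Z`, lies
in all of those. Hence `({a, b}, {u})` is an admissible pair that `Z` respects.
-/

section Noncrossing

variable {V : Type*} [DecidableEq V]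

theorem subset_or_subset_of_not_crossing {A B : Finset V} (h : ¬ Crossing A B)
    {a : V} (haA : a ∈ A) (haB : a ∈ B) : A ⊆ B ∨ B ⊆ A := by
  by_contra! hnot
  exact h ⟨⟨a, mem_inter.2 ⟨haA, haB⟩⟩, sdiff_nonempty.2 hnot.1, sdiff_nonempty.2 hnot.2⟩

variable {ι : Type*} {W : ι → Finset V} {Z : Finset V}

theorem exists_mem_forall_subset_of_mem (hcr : ∀ i j, ¬ Crossing (W i) (W j))
    {a : V} (ha : a ∈ Z) :
    ∃ b ∈ Z, ∀ j, a ∈ W j → b ∈ W j → Z ⊆ W j := by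
  by_cases hex : ∃ i, a ∈ W i ∧ ¬ Z ⊆ W i
  · -- The family may be infinite; minimizing `Z \ W i` still finds the largest trace on `Z`.
    obtain ⟨m, ⟨ham, hZm⟩, hmin⟩ := exists_minimalFor_of_wellFoundedLT _ (fun i ↦ Z \ W i) hex
    obtain ⟨b, hbZ, hbm⟩ := not_subset.1 hZm
    refine ⟨b, hbZ, fun j haj hbj ↦ ?_⟩
    have hmj : W m ⊆ W j :=
      (subset_or_subset_of_not_crossing (hcr m j) ham haj).resolve_right fun h ↦ hbm (h hbj)
    by_contra hZj
    have hsub : Z \ W m ⊆ Z \ W j := hmin ⟨haj, hZj⟩ (sdiff_subset_sdiff subset_rfl hmj)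
    exact (mem_sdiff.1 (hsub (mem_sdiff.2 ⟨hbZ, hbm⟩))).2 hbj
  · push Not at hex
    exact ⟨a, ha, fun j haj _ ↦ hex j haj⟩

theorem exists_card_le_one_disjoint_forall_not_disjoint (hcr : ∀ i j, ¬ Crossing (W i) (W j))
    (hZ : Z.Nonempty) (hne : ∀ i, Z ≠ W i) :
    ∃ U : Finset V, #U ≤ 1 ∧ Disjoint Z U ∧ ∀ j, Z ⊆ W j → ¬ Disjoint (W j) U := by
  by_cases hex : ∃ i, Z ⊆ W i
  · obtain ⟨m, hZm, hmin⟩ := exists_minimalFor_of_wellFoundedLT _ W hex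
    obtain ⟨u, hum, huZ⟩ := exists_of_ssubset (hZm.ssubset_of_ne (hne m))
    refine ⟨{u}, (card_singleton u).le, disjoint_singleton_right.2 huZ, fun j hZj ↦ ?_⟩
    obtain ⟨a, ha⟩ := hZ
    have hmj : W m ⊆ W j :=
      (subset_or_subset_of_not_crossing (hcr m j) (hZm ha) (hZj ha)).elim id (hmin hZj)
    simpa using hmj hum
  · push Not at hex
    exact ⟨∅, by simp, disjoint_empty_right Z, fun j hZj ↦ absurd hZj (hex j)⟩

/-- Admissible pairs `(U₁, U₂)`: disjoint sets with at most two and at most one element such that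
no member of the family `W` includes `U₁` and avoids `U₂`. Each of them stands for one subproblem,
in which `Z` ranges over the sets that include `U₁` and avoid `U₂`. -/
def IsAdmissible (W : ι → Finset V) (U₁ U₂ : Finset V) : Prop :=
  Disjoint U₁ U₂ ∧ #U₁ ≤ 2 ∧ #U₂ ≤ 1 ∧ ∀ j, ¬ (U₁ ⊆ W j ∧ W j ∩ U₂ = ∅)

theorem IsAdmissible.ne {U₁ U₂ : Finset V} (h : IsAdmissible W U₁ U₂) (hU₁ : U₁ ⊆ Z)
    (hU₂ : Disjoint Z U₂) (i : ι) : Z ≠ W i := by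
  obtain ⟨-, -, -, hW⟩ := h
  rintro rfl
  exact hW i ⟨hU₁, disjoint_iff_inter_eq_empty.1 hU₂⟩

theorem exists_isAdmissible (hcr : ∀ i j, ¬ Crossing (W i) (W j))
    (hZ : Z.Nonempty) (hne : ∀ i, Z ≠ W i) :
    ∃ U₁ U₂, IsAdmissible W U₁ U₂ ∧ U₁ ⊆ Z ∧ Disjoint Z U₂ := by
  obtain ⟨a, ha⟩ := hZ
  obtain ⟨b, hb, hab⟩ := exists_mem_forall_subset_of_mem hcr ha
  obtain ⟨U₂, hcard, hdisj, hU₂⟩ :=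
    exists_card_le_one_disjoint_forall_not_disjoint hcr ⟨a, ha⟩ hne
  have hsub : {a, b} ⊆ Z := insert_subset ha (singleton_subset_iff.2 hb)
  refine ⟨{a, b}, U₂, ⟨disjoint_of_subset_left hsub hdisj, card_le_two, hcard, ?_⟩, hsub, hdisj⟩
  rintro j ⟨hj, hempty⟩
  have hZj : Z ⊆ W j := hab j (hj (by simp)) (hj (by simp))
  exact hU₂ j hZj (disjoint_iff_inter_eq_empty.2 hempty)

theorem stmt_7_general {α : Type*} (hcr : ∀ i j, ¬ Crossing (W i) (W j)) (f : Finset V → α) :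
    {x | ∃ Z : Finset V, Z.Nonempty ∧ (∀ i, Z ≠ W i) ∧ x = f Z} =
    {x | ∃ U₁ U₂ Z : Finset V, IsAdmissible W U₁ U₂ ∧
      Z.Nonempty ∧ U₁ ⊆ Z ∧ Disjoint Z U₂ ∧ x = f Z} := by
  ext x
  constructor
  · rintro ⟨Z, hZ, hne, hx⟩
    obtain ⟨U₁, U₂, hadm, hU₁, hU₂⟩ := exists_isAdmissible hcr hZ hne
    exact ⟨U₁, U₂, Z, hadm, hZ, hU₁, hU₂, hx⟩
  · rintro ⟨U₁, U₂, Z, hadm, hZ, hU₁, hU₂, hx⟩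
    exact ⟨Z, hZ, hadm.ne hU₁ hU₂, hx⟩

end Noncrossing

/-- Theorem 10 of the paper, correctness of Algorithm 4. -/
theorem stmt_7 {V : Type*} [Fintype V] [DecidableEq V]
    (G : SimpleGraph V) {t : ℕ} (W : Fin t → Finset V)
    (hcr : ∀ i j : Fin t, ¬ Crossing (W i) (W j))
    (hex : ∃ Z : Finset V, Z.Nonempty ∧ ∀ i, Z ≠ W i) :
    sSup {x : ℝ | ∃ Z : Finset V, Z.Nonempty ∧ (∀ i, Z ≠ W i) ∧ x = dens G Z} =
    sSup {x : ℝ | ∃ U₁ U₂ Z : Finset V, Disjoint U₁ U₂ ∧ U₁.card ≤ 2 ∧ U₂.card ≤ 1 ∧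
      (∀ j : Fin t, ¬ (U₁ ⊆ W j ∧ W j ∩ U₂ = ∅)) ∧
      Z.Nonempty ∧ U₁ ⊆ Z ∧ Z ⊆ U₂ᶜ ∧ x = dens G Z} := by
  simp only [stmt_7_general hcr (dens G), IsAdmissible, and_assoc, subset_compl_iff_disjoint_right]
end
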